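/- Let f, g be convex functions on the unit disk (f, g ∈ 𝒦) and let α, β ≥ 0 with α + 2β ≤ 2. Then Re(1 + z C_{α,β}[f,g]''(z)/C_{α,β}[f,g]'(z)) > 0 for all z in the unit disk, i.e., C_{α,β}[f,g] is convex. -/

import Mathlib

open Complex Metric

/-- The class 𝔉: analytic on the unit disk, `f 0 = 0`, `f' 0 = 1`, `f'` nonvanishing. -/
def Fclass (f : ℂ → ℂ) : Prop :=
  DifferentiableOn ℂ f (ball 0 1) ∧ f 0 = 0 ∧ deriv f 0 = 1 ∧
    ∀ z ∈ ball (0:ℂ) 1, deriv f z ≠ 0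

/-- Normalized convex functions: `Re (1 + z f''/f') > 0` on the unit disk. -/
def Kclass (f : ℂ → ℂ) : Prop :=
  Fclass f ∧ ∀ z ∈ ball (0:ℂ) 1, 0 < (1 + z * deriv (deriv f) z / deriv f z).re

/-!
The derivative of `C_{α,β}[f,g]` is `(f(z)/z)^α g'(z)^β`, so `1 + z C''/C'` is the combination
`α (z f'/f) + β (1 + z g''/g') + (1 - α - β)`. By Marx–Strohhäcker `Re (z f'/f) > 1/2`, hence its
real part exceeds `1 - α/2 - β ≥ 0` unless `α = β = 0`. The principal powers are holomorphic because
a nonvanishing `F` with `F(0) = 1` and `Re (1 + z F'/F) > 0` is subordinate to `(1 - z)⁻²` and so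
omits the negative axis; this applies to `F = f(z)/z` and to `F = g'`. Both subordinations come from
Jack's lemma: where `|ω|` first reaches `1`, `z ω'/ω` is a real number `k ≥ 1`.
-/

theorem re_inv_one_sub {w : ℂ} (hw : w ≠ 1) :
    ((1 - w)⁻¹).re = 1 / 2 + (1 - ‖w‖ ^ 2) / (2 * ‖1 - w‖ ^ 2) := by
  have hpos : normSq (1 - w) ≠ 0 := normSq_eq_zero.not.2 (sub_ne_zero.2 hw.symm)
  rw [inv_re, Complex.sq_norm, Complex.sq_norm]
  field_simp
  simp only [normSq_apply, sub_re, one_re, sub_im, one_im]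
  ring

theorem half_lt_re_inv_one_sub {w : ℂ} (hw : ‖w‖ < 1) : 1 / 2 < ((1 - w)⁻¹).re := by
  have hne : w ≠ 1 := by
    rintro rfl
    simp at hw
  have hpos : 0 < ‖1 - w‖ := norm_pos_iff.2 (sub_ne_zero.2 hne.symm)
  have hsq : 0 < 1 - ‖w‖ ^ 2 := by nlinarith [norm_nonneg w]
  rw [re_inv_one_sub hne]
  linarith [show 0 < (1 - ‖w‖ ^ 2) / (2 * ‖1 - w‖ ^ 2) by positivity]

theorem re_inv_one_sub_of_norm_eq_one {w : ℂ} (hw : ‖w‖ = 1) (hne : w ≠ 1) :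
    ((1 - w)⁻¹).re = 1 / 2 := by
  simp [re_inv_one_sub hne, hw]

theorem sq_mem_slitPlane {w : ℂ} (hw : 0 < w.re) : w ^ 2 ∈ slitPlane := by
  rw [mem_slitPlane_iff, sq, mul_re, mul_im]
  rcases eq_or_ne w.im 0 with him | him
  · left
    simpa [him] using hw.ne'
  · right
    simpa [mul_comm w.im, ← two_mul] using ⟨hw.ne', him⟩

theorem im_eq_zero_of_hasDerivAt_one {φ : ℂ → ℂ} {d : ℂ} (hφ : HasDerivAt φ d 1) (hφ1 : φ 1 = 1)
    (hle : ∀ z, ‖z‖ = 1 → ‖φ z‖ ≤ 1) : d.im = 0 := by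
  have hexp : HasDerivAt (fun w : ℂ ↦ exp (w * I)) I 0 := by
    simpa using ((hasDerivAt_id (0 : ℂ)).mul_const I).cexp
  have hcomp : HasDerivAt (fun w : ℂ ↦ φ (exp (w * I))) (d * I) ((0 : ℝ) : ℂ) :=
    HasDerivAt.comp (h₂ := φ) _ (by simpa using hφ) (by simpa using hexp)
  have hmax : IsLocalMax (fun θ : ℝ ↦ (φ (exp (θ * I))).re) 0 := by
    refine Filter.Eventually.of_forall fun θ ↦ ?_
    simpa [hφ1] using (re_le_norm _).trans (hle (exp (θ * I)) (norm_exp_ofReal_mul_I θ))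
  simpa using hmax.hasDerivAt_eq_zero hcomp.real_of_complex

theorem one_le_re_of_hasDerivAt_one {φ : ℂ → ℂ} {d : ℂ} (hφ : HasDerivAt φ d 1) (hφ1 : φ 1 = 1)
    (hle : ∀ x ∈ Set.Ioo (0 : ℝ) 1, ‖φ x‖ ≤ x) : 1 ≤ d.re := by
  have hre : HasDerivAt (fun x : ℝ ↦ (φ x).re) d.re 1 :=
    HasDerivAt.real_of_complex (by simpa using hφ)
  have hslope := (hasDerivAt_iff_tendsto_slope.1 hre).mono_left
    (nhdsWithin_mono 1 fun x (hx : x ∈ Set.Iio 1) ↦ ne_of_lt hx)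
  refine ge_of_tendsto hslope ?_
  filter_upwards [Ioo_mem_nhdsLT (zero_lt_one' ℝ)] with x hx
  have hφx : (φ x).re ≤ x := (re_le_norm _).trans (hle x hx)
  rw [slope_def_field, le_div_iff_of_neg (sub_neg.2 hx.2), ofReal_one, hφ1, one_re]
  linarith

/-- **Jack's lemma**. -/
theorem exists_mul_deriv_eq_of_forall_norm_le {ω : ℂ → ℂ} {z₀ : ℂ}
    (hω : DifferentiableOn ℂ ω (ball 0 ‖z₀‖)) (hωz₀ : DifferentiableAt ℂ ω z₀) (hω0 : ω 0 = 0)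
    (hne : ω z₀ ≠ 0) (hle : ∀ z ∈ closedBall 0 ‖z₀‖, ‖ω z‖ ≤ ‖ω z₀‖) :
    ∃ k : ℝ, 1 ≤ k ∧ z₀ * deriv ω z₀ = k * ω z₀ := by
  have hz₀ : 0 < ‖z₀‖ := norm_pos_iff.2 fun h ↦ hne (h ▸ hω0)
  let φ : ℂ → ℂ := fun ζ ↦ ω (ζ * z₀) / ω z₀
  have hφ_le : ∀ ζ, ‖ζ‖ ≤ 1 → ‖φ ζ‖ ≤ 1 := fun ζ hζ ↦ by
    rw [norm_div, div_le_one (norm_pos_iff.2 hne)]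
    refine hle _ ?_
    rw [mem_closedBall_zero_iff, norm_mul]
    exact mul_le_of_le_one_left hz₀.le hζ
  have hφ_diff : DifferentiableOn ℂ φ (ball 0 1) := by
    refine (hω.comp (by fun_prop) fun ζ hζ ↦ ?_).div_const _
    rw [mem_ball_zero_iff] at hζ ⊢
    rw [norm_mul]
    exact mul_lt_of_lt_one_left hz₀ hζ
  have hφ_deriv : HasDerivAt φ (deriv ω z₀ * z₀ / ω z₀) 1 := by
    refine (HasDerivAt.comp (h₂ := ω) (1 : ℂ) (by simpa using hωz₀.hasDerivAt) ?_).div_const _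
    simpa using (hasDerivAt_id (1 : ℂ)).mul_const z₀
  have hφ1 : φ 1 = 1 := by simp [φ, hne]
  have hφ_schwarz : ∀ x ∈ Set.Ioo (0 : ℝ) 1, ‖φ x‖ ≤ x := fun x hx ↦ by
    have hx_norm : ‖(x : ℂ)‖ = x := by simp [abs_of_pos hx.1]
    simpa only [hx_norm] using norm_le_norm_of_mapsTo_ball hφ_diff
      (fun ζ hζ ↦ mem_closedBall_zero_iff.2 (hφ_le ζ (mem_ball_zero_iff.1 hζ).le))
      (by simp [φ, hω0]) (hx_norm.trans_lt hx.2)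
  have him := im_eq_zero_of_hasDerivAt_one hφ_deriv hφ1 fun ζ hζ ↦ hφ_le ζ hζ.le
  refine ⟨_, one_le_re_of_hasDerivAt_one hφ_deriv hφ1 hφ_schwarz, ?_⟩
  rw [show ((deriv ω z₀ * z₀ / ω z₀).re : ℂ) = deriv ω z₀ * z₀ / ω z₀ from
    Complex.ext rfl (by simp [him]), div_mul_cancel₀ _ hne, mul_comm]

theorem exists_eq_and_forall_mem_closedBall_le {E : Type*} [NormedAddCommGroup E]
    [NormedSpace ℝ E] [ProperSpace E] {u : E → ℝ} {r c : ℝ} {x₁ : E}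
    (hu : ContinuousOn u (closedBall 0 r)) (hu0 : u 0 < c) (hx₁ : x₁ ∈ closedBall 0 r)
    (hc : c ≤ u x₁) :
    ∃ x₀ ∈ closedBall 0 r, u x₀ = c ∧ ∀ x ∈ closedBall 0 ‖x₀‖, u x ≤ c := by
  have hcompact : IsCompact (closedBall (0 : E) r ∩ u ⁻¹' Set.Ici c) :=
    (isCompact_closedBall _ _).of_isClosed_subset
      (hu.preimage_isClosed_of_isClosed isClosed_closedBall isClosed_Ici) Set.inter_subset_left
  obtain ⟨x₀, ⟨hx₀, hcx₀⟩, hmin⟩ :=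
    hcompact.exists_isMinOn ⟨x₁, hx₁, hc⟩ continuous_norm.continuousOn
  have hsub : closedBall (0 : E) ‖x₀‖ ⊆ closedBall 0 r :=
    closedBall_subset_closedBall (mem_closedBall_zero_iff.1 hx₀)
  have hball : ∀ x ∈ ball (0 : E) ‖x₀‖, u x ≤ c := by
    intro x hx
    by_contra! hlt
    exact (mem_ball_zero_iff.1 hx).not_ge (hmin ⟨hsub (ball_subset_closedBall hx), hlt.le⟩)
  have hne : x₀ ≠ 0 := by
    rintro rfl
    exact hu0.not_ge hcx₀
  have hclosure : closure (ball (0 : E) ‖x₀‖) = closedBall 0 ‖x₀‖ :=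
    closure_ball _ (norm_ne_zero_iff.2 hne)
  have hclosedBall : ∀ x ∈ closedBall (0 : E) ‖x₀‖, u x ≤ c := fun x hx ↦
    le_on_closure hball (hclosure ▸ hu.mono hsub) continuousOn_const (hclosure ▸ hx)
  exact ⟨x₀, hx₀, (hclosedBall x₀ (by simp)).antisymm hcx₀, hclosedBall⟩

theorem norm_lt_one_of_forall_mul_deriv_ne {ω : ℂ → ℂ} {R : ℝ}
    (hω : DifferentiableOn ℂ ω (ball 0 R)) (hω0 : ω 0 = 0)
    (hne : ∀ z ∈ ball 0 R, ‖ω z‖ = 1 → ∀ k : ℝ, 1 ≤ k → z * deriv ω z ≠ k * ω z) :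
    ∀ z ∈ ball 0 R, ‖ω z‖ < 1 := by
  intro z₁ hz₁
  by_contra! hge
  have hsub : closedBall (0 : ℂ) ‖z₁‖ ⊆ ball 0 R :=
    closedBall_subset_ball (mem_ball_zero_iff.1 hz₁)
  obtain ⟨z₀, hz₀, hnorm, hle⟩ := exists_eq_and_forall_mem_closedBall_le
    (hω.continuousOn.mono hsub).norm (by simp [hω0]) (by simp) hge
  have hball : ball (0 : ℂ) ‖z₀‖ ⊆ ball 0 R :=
    ball_subset_ball (mem_ball_zero_iff.1 (hsub hz₀)).le
  obtain ⟨k, hk, hjack⟩ := exists_mul_deriv_eq_of_forall_norm_le (hω.mono hball)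
    (hω.differentiableAt (isOpen_ball.mem_nhds (hsub hz₀))) hω0
    (norm_ne_zero_iff.1 (hnorm ▸ one_ne_zero)) (hnorm ▸ hle)
  exact hne z₀ (hsub hz₀) hnorm k hk hjack

theorem sub_smul_deriv_dslope {𝕜 E : Type*} [NontriviallyNormedField 𝕜] [NormedAddCommGroup E]
    [NormedSpace 𝕜 E] {f : 𝕜 → E} (a : 𝕜) {z : 𝕜} (hf : DifferentiableAt 𝕜 f z) :
    (z - a) • deriv (dslope f a) z = deriv f z - dslope f a z := by
  rcases eq_or_ne z a with rfl | hne
  · simp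
  · have hd : HasDerivAt (dslope f a) (deriv (dslope f a) z) z :=
      ((differentiableAt_dslope_of_ne hne).2 hf).hasDerivAt
    have hprod := (((hasDerivAt_id z).sub_const a).smul hd).congr_of_eventuallyEq
      (f₁ := fun w ↦ f w - f a) (.of_forall fun w ↦ (sub_smul_dslope f a w).symm)
    have hderiv : deriv f z = (z - a) • deriv (dslope f a) z + dslope f a z := by
      simpa using (deriv_sub_const (f a)).symm.trans hprod.deriv
    rw [hderiv, add_sub_cancel_right]

theorem logDeriv_cpow_const {F : ℂ → ℂ} {z : ℂ} (c : ℂ) (hF : DifferentiableAt ℂ F z)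
    (hslit : F z ∈ slitPlane) : logDeriv (fun w ↦ F w ^ c) z = c * logDeriv F z := by
  have hne : F z ≠ 0 := slitPlane_ne_zero hslit
  have hpow : F z ^ c ≠ 0 := by simp [cpow_eq_zero_iff, hne]
  rw [logDeriv_apply, logDeriv_apply, (hF.hasDerivAt.cpow_const hslit).deriv,
    cpow_sub _ _ hne, cpow_one]
  field_simp

theorem exists_hasDerivAt_logDeriv_and_exp_eq {F : ℂ → ℂ} {c ℓ : ℂ} {R : ℝ}
    (hF : DifferentiableOn ℂ F (ball c R)) (hne : ∀ z ∈ ball c R, F z ≠ 0) (hℓ : exp ℓ = F c) :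
    ∃ L : ℂ → ℂ, L c = ℓ ∧ ∀ z ∈ ball c R, HasDerivAt L (logDeriv F z) z ∧ exp (L z) = F z := by
  obtain ⟨L, hLc, hL⟩ := ((hF.deriv isOpen_ball).div hF hne).isExactOn_ball.with_val_at c ℓ
  have hquot : ∀ z ∈ ball c R, HasDerivAt (fun z ↦ exp (L z) / F z) 0 z := fun z hz ↦ by
    have hFz := (hF.differentiableAt (isOpen_ball.mem_nhds hz)).hasDerivAt
    refine ((hL z hz).cexp.fun_div hFz (hne z hz)).congr_deriv ?_
    have := hne z hz
    simp only [Pi.div_apply]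
    field_simp
    ring
  refine ⟨L, hLc, fun z hz ↦ ⟨hL z hz, ?_⟩⟩
  have hc : c ∈ ball c R := mem_ball_self (pos_of_mem_ball hz)
  have hconst := isOpen_ball.is_const_of_deriv_eq_zero (convex_ball c R).isPreconnected
    (fun w hw ↦ (hquot w hw).differentiableAt.differentiableWithinAt)
    (fun w hw ↦ (hquot w hw).deriv) hz hc
  rwa [hLc, hℓ, div_self (hne c hc), div_eq_one_iff_eq (hne z hz)] at hconst

-- The extremal function is `(1 - z)⁻²`, so Jack's lemma is applied to `1 - F ^ (-1/2)`.
theorem mem_slitPlane_of_re_one_add_mul_logDeriv_pos {F : ℂ → ℂ} {R : ℝ}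
    (hF : DifferentiableOn ℂ F (ball 0 R)) (hF0 : F 0 = 1) (hne : ∀ z ∈ ball 0 R, F z ≠ 0)
    (hre : ∀ z ∈ ball 0 R, 0 < (1 + z * logDeriv F z).re) :
    ∀ z ∈ ball 0 R, F z ∈ slitPlane := by
  obtain ⟨L, hL0, hL⟩ := exists_hasDerivAt_logDeriv_and_exp_eq hF hne (ℓ := 0) (by simp [hF0])
  let ω : ℂ → ℂ := fun z ↦ 1 - exp (-(L z / 2))
  have hω : ∀ z ∈ ball 0 R, HasDerivAt ω (logDeriv F z / 2 * (1 - ω z)) z := fun z hz ↦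
    ((((hL z hz).1.div_const 2).fun_neg.cexp).const_sub 1).congr_deriv (by simp only [ω]; ring)
  have hω_lt : ∀ z ∈ ball 0 R, ‖ω z‖ < 1 := by
    refine norm_lt_one_of_forall_mul_deriv_ne
      (fun z hz ↦ (hω z hz).differentiableAt.differentiableWithinAt) (by simp [ω, hL0]) ?_
    intro z hz hnorm k hk hjack
    rw [(hω z hz).deriv] at hjack
    have hω_ne : 1 - ω z ≠ 0 := by simp [ω]
    have hquot : 1 + z * logDeriv F z = (2 * k : ℝ) * (1 - ω z)⁻¹ + (1 - 2 * k : ℝ) := by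
      push_cast
      field_simp
      linear_combination 2 * hjack
    have hpos := hre z hz
    rw [hquot, add_re, re_ofReal_mul, ofReal_re,
      re_inv_one_sub_of_norm_eq_one hnorm (sub_ne_zero.1 hω_ne).symm] at hpos
    linarith
  intro z hz
  have hsq : F z = (1 - ω z)⁻¹ ^ 2 := by
    rw [← (hL z hz).2, sub_sub_cancel, ← exp_neg, neg_neg, ← exp_nat_mul]
    congr 1
    push_cast
    ring
  rw [hsq]
  exact sq_mem_slitPlane (by linarith [half_lt_re_inv_one_sub (hω_lt z hz)])

theorem re_one_add_mul_logDeriv_cpow_mul_cpow_pos {F G : ℂ → ℂ} {z : ℂ} {α β ρ σ : ℝ}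
    (hF : DifferentiableAt ℂ F z) (hG : DifferentiableAt ℂ G z)
    (hFslit : F z ∈ slitPlane) (hGslit : G z ∈ slitPlane)
    (hρ : ρ < (1 + z * logDeriv F z).re) (hσ : σ < (1 + z * logDeriv G z).re)
    (hα : 0 ≤ α) (hβ : 0 ≤ β) (hsum : α * (1 - ρ) + β * (1 - σ) ≤ 1) :
    0 < (1 + z * logDeriv (fun w ↦ F w ^ (α : ℂ) * G w ^ (β : ℂ)) z).re := by
  have hlog : 1 + z * logDeriv (fun w ↦ F w ^ (α : ℂ) * G w ^ (β : ℂ)) z =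
      (α : ℝ) * (1 + z * logDeriv F z) + (β : ℝ) * (1 + z * logDeriv G z) +
        (1 - α - β : ℝ) := by
    rw [logDeriv_mul z (by simp [cpow_eq_zero_iff, slitPlane_ne_zero hFslit])
      (by simp [cpow_eq_zero_iff, slitPlane_ne_zero hGslit])
      (hF.cpow_const hFslit) (hG.cpow_const hGslit), logDeriv_cpow_const _ hF hFslit,
      logDeriv_cpow_const _ hG hGslit]
    push_cast
    ring
  rw [hlog, add_re, add_re, re_ofReal_mul, re_ofReal_mul, ofReal_re]
  rcases hα.eq_or_lt with rfl | hα_pos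
  · rcases hβ.eq_or_lt with rfl | hβ_pos
    · simp
    · nlinarith [mul_lt_mul_of_pos_left hσ hβ_pos]
  · nlinarith [mul_lt_mul_of_pos_left hρ hα_pos, mul_le_mul_of_nonneg_left hσ.le hβ]

theorem hasDerivAt_integral_radial {H : ℂ → ℂ} {R : ℝ} (hH : DifferentiableOn ℂ H (ball 0 R))
    {z : ℂ} (hz : z ∈ ball 0 R) :
    HasDerivAt (fun z ↦ ∫ t in (0 : ℝ)..1, H (t * z) * z) (H z) z := by
  obtain ⟨P, hP0, hP⟩ := hH.isExactOn_ball.with_val_at 0 0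
  refine (hP z hz).congr_of_eventuallyEq ?_
  filter_upwards [isOpen_ball.mem_nhds hz] with w hw
  have hmem : ∀ t ∈ Set.uIcc (0 : ℝ) 1, (t : ℂ) * w ∈ ball (0 : ℂ) R := fun t ht ↦ by
    rw [Set.uIcc_of_le zero_le_one] at ht
    rw [mem_ball_zero_iff] at hw ⊢
    rw [norm_mul, norm_real, Real.norm_of_nonneg ht.1]
    exact (mul_le_of_le_one_left (norm_nonneg w) ht.2).trans_lt hw
  have hderiv : ∀ t ∈ Set.uIcc (0 : ℝ) 1,
      HasDerivAt (fun t : ℝ ↦ P (t * w)) (H (t * w) * w) t := fun t ht ↦ by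
    refine HasDerivAt.comp_ofReal (e := fun s : ℂ ↦ P (s * w)) ?_
    refine HasDerivAt.comp (h₂ := P) _ (hP _ (hmem t ht)) ?_
    simpa using (hasDerivAt_id (t : ℂ)).mul_const w
  have hcont : ContinuousOn (fun t : ℝ ↦ H (t * w) * w) (Set.uIcc 0 1) :=
    (hH.continuousOn.comp (by fun_prop) hmem).mul continuousOn_const
  rw [intervalIntegral.integral_eq_sub_of_hasDerivAt hderiv hcont.intervalIntegrable]
  simp [hP0]

theorem integral_radial_congr {H₁ H₂ : ℂ → ℂ} (h : ∀ w ≠ 0, H₁ w = H₂ w) (z : ℂ) :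
    ∫ t in (0 : ℝ)..1, H₁ (t * z) * z = ∫ t in (0 : ℝ)..1, H₂ (t * z) * z := by
  rcases eq_or_ne z 0 with rfl | hz
  · simp
  · refine intervalIntegral.integral_congr_ae (Filter.Eventually.of_forall fun t ht ↦ ?_)
    rw [Set.uIoc_of_le zero_le_one] at ht
    rw [h _ (mul_ne_zero (ofReal_ne_zero.2 ht.1.ne') hz)]

/-- Normalized starlike functions of order `ρ`: `Re (z f'(z) / f(z)) > ρ` on the unit disk. The
quotient `f(z) / z` is written `dslope f 0 z`, which removes the singularity at `0`. -/
def IsStarlikeOfOrder (ρ : ℝ) (f : ℂ → ℂ) : Prop :=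
  DifferentiableOn ℂ f (ball 0 1) ∧ f 0 = 0 ∧ deriv f 0 = 1 ∧
    ∀ z ∈ ball (0 : ℂ) 1, dslope f 0 z ≠ 0 ∧ ρ < (deriv f z / dslope f 0 z).re

namespace IsStarlikeOfOrder

variable {f : ℂ → ℂ} {ρ : ℝ}

theorem differentiableOn_dslope (hf : IsStarlikeOfOrder ρ f) :
    DifferentiableOn ℂ (dslope f 0) (ball 0 1) :=
  (Complex.differentiableOn_dslope (ball_mem_nhds _ one_pos)).2 hf.1

theorem lt_re_one_add_mul_logDeriv_dslope (hf : IsStarlikeOfOrder ρ f) {z : ℂ}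
    (hz : z ∈ ball 0 1) : ρ < (1 + z * logDeriv (dslope f 0) z).re := by
  obtain ⟨hd, -, -, hstar⟩ := hf
  obtain ⟨hne, hre⟩ := hstar z hz
  have hdslope : z * deriv (dslope f 0) z = deriv f z - dslope f 0 z := by
    simpa using sub_smul_deriv_dslope 0 (hd.differentiableAt (isOpen_ball.mem_nhds hz))
  have hquot : 1 + z * logDeriv (dslope f 0) z = deriv f z / dslope f 0 z := by
    rw [logDeriv_apply, ← mul_div_assoc, hdslope, sub_div, div_self hne, add_sub_cancel]
  rwa [hquot]

theorem dslope_mem_slitPlane (hf : IsStarlikeOfOrder ρ f) (hρ : 0 ≤ ρ) :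
    ∀ z ∈ ball 0 1, dslope f 0 z ∈ slitPlane :=
  mem_slitPlane_of_re_one_add_mul_logDeriv_pos hf.differentiableOn_dslope
    (by rw [dslope_same, hf.2.2.1]) (fun z hz ↦ (hf.2.2.2 z hz).1)
    fun _ hz ↦ hρ.trans_lt (hf.lt_re_one_add_mul_logDeriv_dslope hz)

end IsStarlikeOfOrder

namespace Kclass

variable {f : ℂ → ℂ}

theorem differentiableOn_dslope (hf : Kclass f) : DifferentiableOn ℂ (dslope f 0) (ball 0 1) :=
  (Complex.differentiableOn_dslope (ball_mem_nhds _ one_pos)).2 hf.1.1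

theorem differentiableOn_deriv (hf : Kclass f) : DifferentiableOn ℂ (deriv f) (ball 0 1) :=
  hf.1.1.deriv isOpen_ball

theorem re_one_add_mul_logDeriv_deriv_pos (hf : Kclass f) {z : ℂ} (hz : z ∈ ball 0 1) :
    0 < (1 + z * logDeriv (deriv f) z).re := by
  rw [logDeriv_apply, ← mul_div_assoc]
  exact hf.2 z hz

theorem deriv_mem_slitPlane (hf : Kclass f) : ∀ z ∈ ball 0 1, deriv f z ∈ slitPlane :=
  mem_slitPlane_of_re_one_add_mul_logDeriv_pos hf.differentiableOn_deriv hf.1.2.2.1 hf.1.2.2.2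
    fun _ hz ↦ hf.re_one_add_mul_logDeriv_deriv_pos hz

theorem mul_deriv_dslope_div_deriv (hf : Kclass f) {z : ℂ} (hz : z ∈ ball 0 1) :
    z * deriv (fun w ↦ dslope f 0 w / deriv f w) z =
      1 - dslope f 0 z / deriv f z * (1 + z * logDeriv (deriv f) z) := by
  have hdslope : z * deriv (dslope f 0) z = deriv f z - dslope f 0 z := by
    simpa using sub_smul_deriv_dslope 0 (hf.1.1.differentiableAt (isOpen_ball.mem_nhds hz))
  have hf' := hf.differentiableOn_deriv.differentiableAt (isOpen_ball.mem_nhds hz)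
  have hF := hf.differentiableOn_dslope.differentiableAt (isOpen_ball.mem_nhds hz)
  have hne := hf.1.2.2.2 z hz
  rw [deriv_fun_div hF hf' hne, logDeriv_apply]
  field_simp
  linear_combination (deriv f z) * hdslope

/-- The **Marx–Strohhäcker theorem**. -/
theorem isStarlikeOfOrder_half (hf : Kclass f) : IsStarlikeOfOrder (1 / 2) f := by
  let ω : ℂ → ℂ := fun z ↦ 1 - dslope f 0 z / deriv f z
  have hω_lt : ∀ z ∈ ball 0 1, ‖ω z‖ < 1 := by
    refine norm_lt_one_of_forall_mul_deriv_ne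
      ((differentiableOn_const 1).sub
        (hf.differentiableOn_dslope.div hf.differentiableOn_deriv hf.1.2.2.2))
      (by simp [ω, hf.1.2.2.1]) fun z hz hnorm k hk hjack ↦ ?_
    have hderiv : (1 - ω z) * (1 + z * logDeriv (deriv f) z) = 1 + k * ω z := by
      rw [← hjack, deriv_const_sub, mul_neg, hf.mul_deriv_dslope_div_deriv hz]
      ring
    have hω_ne : ω z ≠ 1 := fun h ↦ by
      have := congrArg re hderiv
      simp [h] at this
      linarith
    have hsub_ne : 1 - ω z ≠ 0 := sub_ne_zero.2 hω_ne.symm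
    have hquot : 1 + z * logDeriv (deriv f) z = (1 + k : ℝ) * (1 - ω z)⁻¹ - (k : ℝ) := by
      push_cast
      field_simp
      linear_combination hderiv
    have hpos := hf.re_one_add_mul_logDeriv_deriv_pos hz
    rw [hquot, sub_re, re_ofReal_mul, ofReal_re, re_inv_one_sub_of_norm_eq_one hnorm hω_ne] at hpos
    linarith
  refine ⟨hf.1.1, hf.1.2.1, hf.1.2.2.1, fun z hz ↦ ⟨fun h ↦ ?_, ?_⟩⟩
  · simpa [ω, h] using hω_lt z hz
  · simpa [ω] using half_lt_re_inv_one_sub (hω_lt z hz)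

end Kclass

theorem stmt_8_general {f g : ℂ → ℂ} {α β ρ : ℝ} (hf : IsStarlikeOfOrder ρ f) (hg : Kclass g)
    (hρ : 0 ≤ ρ) (hα : 0 ≤ α) (hβ : 0 ≤ β) (hsum : α * (1 - ρ) + β ≤ 1) {C : ℂ → ℂ}
    (hC : ∀ z ∈ ball (0 : ℂ) 1,
      C z = ∫ t in (0 : ℝ)..1,
        (f (t * z) / (t * z)) ^ (α : ℂ) * deriv g (t * z) ^ (β : ℂ) * z) :
    ∀ z ∈ ball (0 : ℂ) 1, 0 < (1 + z * deriv (deriv C) z / deriv C z).re := by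
  let H : ℂ → ℂ := fun w ↦ dslope f 0 w ^ (α : ℂ) * deriv g w ^ (β : ℂ)
  have hF := hf.differentiableOn_dslope
  have hG := hg.differentiableOn_deriv
  have hFslit := hf.dslope_mem_slitPlane hρ
  have hGslit := hg.deriv_mem_slitPlane
  have hH : DifferentiableOn ℂ H (ball 0 1) := (hF.cpow_const hFslit).mul (hG.cpow_const hGslit)
  have hdslope : ∀ w ≠ 0, f w / w = dslope f 0 w := fun w hw ↦ by
    rw [dslope_of_ne _ hw, slope_def_field, hf.2.1, sub_zero, sub_zero]
  have hCH : Set.EqOn C (fun z ↦ ∫ t in (0 : ℝ)..1, H (t * z) * z) (ball 0 1) := fun z hz ↦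
    (hC z hz).trans <| integral_radial_congr
      (H₁ := fun w ↦ (f w / w) ^ (α : ℂ) * deriv g w ^ (β : ℂ))
      (fun w hw ↦ by simp only [H, hdslope w hw]) z
  have hderiv : Set.EqOn (deriv C) H (ball 0 1) := fun z hz ↦
    ((hasDerivAt_integral_radial hH hz).congr_of_eventuallyEq
      (hCH.eventuallyEq_of_mem (isOpen_ball.mem_nhds hz))).deriv
  intro z hz
  have hnhds := isOpen_ball.mem_nhds hz
  rw [mul_div_assoc, ← logDeriv_apply,
    (logDeriv_congr_nhds (hderiv.eventuallyEq_of_mem hnhds)).eq_of_nhds]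
  exact re_one_add_mul_logDeriv_cpow_mul_cpow_pos (hF.differentiableAt hnhds)
    (hG.differentiableAt hnhds) (hFslit z hz) (hGslit z hz)
    (hf.lt_re_one_add_mul_logDeriv_dslope hz) (hg.re_one_add_mul_logDeriv_deriv_pos hz) hα hβ
    (by linarith)

/-- for convex `f, g` and `α, β ≥ 0` with `α + 2β ≤ 2`, the operator
`C_{α,β}[f,g]` is convex. -/
theorem stmt_8 (f g : ℂ → ℂ) (hf : Kclass f) (hg : Kclass g)
    (α β : ℝ) (hα : 0 ≤ α) (hβ : 0 ≤ β) (hsum : α + 2 * β ≤ 2)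
    (C : ℂ → ℂ)
    (hC : ∀ z ∈ ball (0:ℂ) 1,
      C z = ∫ t in (0:ℝ)..1,
        (f ((t : ℂ) * z) / ((t : ℂ) * z)) ^ (α : ℂ)
          * (deriv g ((t : ℂ) * z)) ^ (β : ℂ) * z) :
    ∀ z ∈ ball (0:ℂ) 1, 0 < (1 + z * deriv (deriv C) z / deriv C z).re := by
  exact stmt_8_general hf.isStarlikeOfOrder_half hg (by norm_num) hα hβ (by linarith) hC
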